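/- Let d ≥ 1 and T ≥ 1 be integers and let μ, ν be Borel probability measures on the path space ℝ^{dT}. Then ATV(μ, ν) ≤ (2T − 1) · TV(μ, ν); that is, the infimum over bicausal couplings π of ∫_{x ≠ y} 2 dπ(x, y) is at most (2T − 1) times the infimum over all couplings π of ∫_{x ≠ y} 2 dπ(x, y). -/

import Mathlib

open MeasureTheory ProbabilityTheory
open scoped ENNReal

noncomputable section

/-- The path space `ℝ^{dT}`: `T` time steps with state space `ℝ^d`. -/
abbrev Traj (d T : ℕ) : Type := Fin T → Fin d → ℝ

/-- Restriction of a path to its first `t` coordinates. -/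
def restr (d : ℕ) {t T : ℕ} (h : t ≤ T) (x : Traj d T) : Traj d t :=
  fun i => x (Fin.castLE h i)

lemma measurable_restr (d : ℕ) {t T : ℕ} (h : t ≤ T) : Measurable (restr d h) :=
  measurable_pi_lambda _ (fun i => measurable_pi_apply _)

/-- σ-algebra generated by the first `t` coordinates of the first component. -/
def sigmaX (d T : ℕ) {t : ℕ} (h : t ≤ T) : MeasurableSpace (Traj d T × Traj d T) :=
  MeasurableSpace.comap (fun ω => restr d h ω.1) inferInstance

/-- σ-algebra generated by the first `t` coordinates of the second component. -/
def sigmaY (d T : ℕ) {t : ℕ} (h : t ≤ T) : MeasurableSpace (Traj d T × Traj d T) :=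
  MeasurableSpace.comap (fun ω => restr d h ω.2) inferInstance

lemma sigmaX_le (d T : ℕ) {t : ℕ} (h : t ≤ T) :
    sigmaX d T h ≤ (inferInstance : MeasurableSpace (Traj d T × Traj d T)) :=
  ((measurable_restr d h).comp measurable_fst).comap_le

lemma sigmaY_le (d T : ℕ) {t : ℕ} (h : t ≤ T) :
    sigmaY d T h ≤ (inferInstance : MeasurableSpace (Traj d T × Traj d T)) :=
  ((measurable_restr d h).comp measurable_snd).comap_le

/-- A coupling `π` of two laws on the path space is *bicausal* if for each `t < T`,
`σ(Y_1,…,Y_t)` is conditionally independent of `σ(X_1,…,X_T)` given `σ(X_1,…,X_t)`, and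
symmetrically. -/
def IsBicausal (d T : ℕ) (π : Measure (Traj d T × Traj d T)) [IsFiniteMeasure π] : Prop :=
  ∀ t, 1 ≤ t → ∀ h : t + 1 ≤ T,
    CondIndep (sigmaX d T (Nat.le_of_succ_le h)) (sigmaY d T (Nat.le_of_succ_le h))
      (sigmaX d T (le_refl T)) (sigmaX_le d T (Nat.le_of_succ_le h)) π ∧
    CondIndep (sigmaY d T (Nat.le_of_succ_le h)) (sigmaX d T (Nat.le_of_succ_le h))
      (sigmaY d T (le_refl T)) (sigmaY_le d T (Nat.le_of_succ_le h)) π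

/-- The set of couplings of `μ` and `ν`. -/
def Cpl {α : Type*} [MeasurableSpace α] (μ ν : Measure α) : Set (Measure (α × α)) :=
  {π | IsProbabilityMeasure π ∧ π.map Prod.fst = μ ∧ π.map Prod.snd = ν}

/-- The set of bicausal couplings of `μ` and `ν`. -/
def BCpl {d T : ℕ} (μ ν : Measure (Traj d T)) : Set (Measure (Traj d T × Traj d T)) :=
  {π | π ∈ Cpl μ ν ∧ ∃ _ : IsFiniteMeasure π, IsBicausal d T π}

/-- Weighted total variation distance. -/
def TVw {d T : ℕ} (w : Traj d T → ℝ) (μ ν : Measure (Traj d T)) : ℝ≥0∞ :=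
  ⨅ π ∈ Cpl μ ν, ∫⁻ q in {q : Traj d T × Traj d T | q.1 ≠ q.2},
    (ENNReal.ofReal (w q.1) + ENNReal.ofReal (w q.2)) ∂π

/-- Weighted adapted total variation distance. -/
def ATVw {d T : ℕ} (w : Traj d T → ℝ) (μ ν : Measure (Traj d T)) : ℝ≥0∞ :=
  ⨅ π ∈ BCpl μ ν, ∫⁻ q in {q : Traj d T × Traj d T | q.1 ≠ q.2},
    (ENNReal.ofReal (w q.1) + ENNReal.ofReal (w q.2)) ∂π

/-- `p`-th power of the adapted Wasserstein distance (cost `|x-y|_p^p`). -/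
def AWpow (p : ℝ) {d T : ℕ} (μ ν : Measure (Traj d T)) : ℝ≥0∞ :=
  ⨅ π ∈ BCpl μ ν, ∫⁻ q, ENNReal.ofReal (∑ i, ∑ j, |q.1 i j - q.2 i j| ^ p) ∂π

/-- The weight `w_p(x) = 1 + |x|_p^p`. -/
def wp (p : ℝ) {d T : ℕ} (x : Traj d T) : ℝ := 1 + ∑ i, ∑ j, |x i j| ^ p

/-- The kernel `κ` with total mass rescaled by the function `c` of the starting point. -/
def scaleKernel {α β : Type*} [MeasurableSpace α] [MeasurableSpace β]
    (c : α → ℝ≥0∞) (κ : Kernel α β) [IsSFiniteKernel κ] : Kernel α β :=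
  κ.withDensity fun a _ => c a

section Scale

variable {α β : Type*} [MeasurableSpace α] [MeasurableSpace β]

lemma scaleKernel_apply {c : α → ℝ≥0∞} (hc : Measurable c) (κ : Kernel α β)
    [IsSFiniteKernel κ] (a : α) : scaleKernel c κ a = c a • κ a := by
  rw [scaleKernel, Kernel.withDensity_apply _ (by fun_prop), withDensity_const]

lemma isSFiniteKernel_scaleKernel {c : α → ℝ≥0∞} (hc : ∀ a, c a ≠ ∞) (κ : Kernel α β)
    [IsSFiniteKernel κ] : IsSFiniteKernel (scaleKernel c κ) :=
  Kernel.IsSFiniteKernel.withDensity κ fun a _ => hc a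

lemma compProd_scaleKernel (μ : Measure α) [IsFiniteMeasure μ] {c : α → ℝ≥0∞}
    (hc : Measurable c) (hc' : ∀ a, c a ≠ ∞) (κ : Kernel α β) [IsSFiniteKernel κ] :
    μ ⊗ₘ scaleKernel c κ = μ.withDensity c ⊗ₘ κ := by
  have := isSFiniteKernel_scaleKernel hc' κ
  ext s hs
  rw [Measure.compProd_apply hs, Measure.compProd_apply hs,
    lintegral_withDensity_eq_lintegral_mul _ hc (Kernel.measurable_kernel_prodMk_left hs)]
  simp [scaleKernel_apply hc]

end Scale

lemma exists_density_add {E : Type*} [MeasurableSpace E] (r s : Measure E)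
    [IsFiniteMeasure r] [IsFiniteMeasure s] :
    ∃ f : E → ℝ≥0∞, Measurable f ∧ (∀ x, f x ≤ 1) ∧ (r + s).withDensity f = r ∧
      (r + s).withDensity (fun x => 1 - f x) = s := by
  have hle : r ≤ r + s := Measure.le_add_right le_rfl
  have hae : r.rnDeriv (r + s) ≤ᵐ[r + s] 1 := Measure.rnDeriv_le_one_of_le hle
  have hr : (r + s).withDensity (fun x => min (r.rnDeriv (r + s) x) 1) = r := by
    rw [withDensity_congr_ae (g := r.rnDeriv (r + s)),
      Measure.withDensity_rnDeriv_eq _ _ (Measure.absolutelyContinuous_of_le hle)]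
    filter_upwards [hae] with x hx using min_eq_left hx
  have hm : Measurable (fun x => min (r.rnDeriv (r + s) x) 1) :=
    (Measure.measurable_rnDeriv r (r + s)).min measurable_const
  refine ⟨_, hm, fun x => min_le_right _ _, hr, ?_⟩
  have hsum : (r + s).withDensity (fun x => min (r.rnDeriv (r + s) x) 1) +
      (r + s).withDensity (fun x => 1 - min (r.rnDeriv (r + s) x) 1) = r + s := by
    rw [← withDensity_add_left hm]
    conv_rhs => rw [← withDensity_one (μ := r + s)]
    congr 1
    ext x
    simp
  rw [hr] at hsum
  ext t ht
  have := congrArg (fun m => m t) hsum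
  simp only [Measure.add_apply] at this
  exact (ENNReal.add_right_inj (measure_ne_top r t)).1 this

lemma exists_kernel_mixture {E F : Type*} [MeasurableSpace E] [MeasurableSpace F]
    [StandardBorelSpace F] [Nonempty F] (ρ σ : Measure (E × F))
    [IsFiniteMeasure ρ] [IsFiniteMeasure σ] :
    ∃ f : E → ℝ≥0∞, Measurable f ∧ (∀ x, f x ≤ 1) ∧
      (ρ + σ).fst ⊗ₘ (scaleKernel f ρ.condKernel +
        scaleKernel (fun x => 1 - f x) σ.condKernel) = ρ + σ ∧
      ∫⁻ x, (1 - f x) ∂(ρ + σ).fst = σ Set.univ := by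
  have hfst : (ρ + σ).fst = ρ.fst + σ.fst := by
    simp [Measure.fst, Measure.map_add _ _ measurable_fst]
  obtain ⟨f, hf, hf1, h1, h2⟩ := exists_density_add ρ.fst σ.fst
  refine ⟨f, hf, hf1, ?_, ?_⟩
  · have hft : ∀ x, f x ≠ ∞ := fun x => ne_top_of_le_ne_top ENNReal.one_ne_top (hf1 x)
    have hft' : ∀ x, 1 - f x ≠ ∞ := fun x =>
      ne_top_of_le_ne_top ENNReal.one_ne_top tsub_le_self
    have := isSFiniteKernel_scaleKernel hft ρ.condKernel
    have := isSFiniteKernel_scaleKernel hft' σ.condKernel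
    rw [Measure.compProd_add_right, compProd_scaleKernel _ hf hft,
      compProd_scaleKernel _ (by fun_prop) hft', hfst, h1, h2, Measure.disintegrate,
      Measure.disintegrate]
  · rw [hfst, ← setLIntegral_univ, ← withDensity_apply _ MeasurableSet.univ, h2, Measure.fst_univ]

/-- Two Markov kernels with a common part `κ` admit a coupling which puts the common part on the
diagonal. -/
lemma exists_coupling_of_common_part {Z F : Type*} [MeasurableSpace Z] [MeasurableSpace F]
    [MeasurableEq F]
    (κ α' β' A B : Kernel Z F) [IsSFiniteKernel κ] [IsSFiniteKernel α'] [IsSFiniteKernel β']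
    [IsMarkovKernel A] [IsMarkovKernel B] (hA : κ + α' = A) (hB : κ + β' = B) :
    ∃ K : Kernel Z (F × F), IsMarkovKernel K ∧ K.fst = A ∧ K.snd = B ∧
      ∀ z, K z {p | p.1 ≠ p.2} ≤ 1 - κ z Set.univ := by
  have hc : Measurable fun z => (1 - κ z Set.univ)⁻¹ :=
    (measurable_const.sub (κ.measurable_coe MeasurableSet.univ)).inv
  have hdiag : Measurable fun a : F => (a, a) := by fun_prop
  have key : ∀ (κ' A : Kernel Z F) [IsMarkovKernel A], κ + κ' = A → ∀ z,
      κ z Set.univ ≤ 1 ∧ κ' z Set.univ = 1 - κ z Set.univ := by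
    intro κ' A _ h z
    have h1 : κ z Set.univ + κ' z Set.univ = 1 := by
      rw [← measure_univ (μ := A z), ← h]; rfl
    have hle : κ z Set.univ ≤ 1 := h1 ▸ le_self_add
    exact ⟨hle, (ENNReal.sub_eq_of_eq_add_rev (ne_top_of_le_ne_top ENNReal.one_ne_top hle)
      h1.symm).symm⟩
  have cancel : ∀ (ξ : Kernel Z F) z, ξ z Set.univ = 1 - κ z Set.univ →
      ((1 - κ z Set.univ)⁻¹ * (1 - κ z Set.univ)) • ξ z = ξ z := by
    intro ξ z hξ
    by_cases h0 : 1 - κ z Set.univ = 0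
    · rw [h0] at hξ
      rw [Measure.measure_univ_eq_zero.1 hξ, smul_zero]
    · rw [ENNReal.inv_mul_cancel h0 (ne_top_of_le_ne_top ENNReal.one_ne_top tsub_le_self), one_smul]
  set K : Kernel Z (F × F) := κ.map (fun a => (a, a)) +
    scaleKernel (fun z => (1 - κ z Set.univ)⁻¹) (α' ×ₖ β') with hK
  have hKz : ∀ z, K z = (κ z).map (fun a => (a, a)) +
      (1 - κ z Set.univ)⁻¹ • (α' z).prod (β' z) := by
    intro z
    rw [hK, add_apply, Kernel.map_apply _ hdiag, scaleKernel_apply hc, Kernel.prod_apply]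
  have hfst : K.fst = A := by
    ext1 z
    rw [Kernel.fst_apply, hKz, Measure.map_add _ _ measurable_fst, Measure.map_smul,
      Measure.map_map measurable_fst hdiag, Measure.map_fst_prod, (key β' B hB z).2, smul_smul,
      cancel α' z (key α' A hA z).2, ← hA]
    simp [Function.comp_def]
  have hsnd : K.snd = B := by
    ext1 z
    rw [Kernel.snd_apply, hKz, Measure.map_add _ _ measurable_snd, Measure.map_smul,
      Measure.map_map measurable_snd hdiag, Measure.map_snd_prod, (key α' A hA z).2, smul_smul,
      cancel β' z (key β' B hB z).2, ← hB]
    simp [Function.comp_def]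
  have hKm : ∀ z, K z Set.univ = 1 := by
    intro z
    have := congrArg (fun k : Kernel Z F => k z Set.univ) hfst
    simpa [Kernel.fst_apply' _ _ MeasurableSet.univ] using this
  have hKmarkov : IsMarkovKernel K := ⟨fun z => ⟨hKm z⟩⟩
  refine ⟨K, hKmarkov, hfst, hsnd, fun z => ?_⟩
  have hcompl : {p : F × F | p.1 ≠ p.2} = {p : F × F | p.1 = p.2}ᶜ := rfl
  rw [hcompl, prob_compl_eq_one_sub (measurableSet_eq_fun measurable_fst measurable_snd)]
  gcongr
  rw [hKz, Measure.add_apply,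
    Measure.map_apply hdiag (measurableSet_eq_fun measurable_fst measurable_snd)]
  simp

lemma condIndepFun_of_map_eq_compProd {Ω α β γ : Type*} [MeasurableSpace Ω] [StandardBorelSpace Ω]
    [MeasurableSpace α] [MeasurableSpace β] [StandardBorelSpace β] [Nonempty β]
    [MeasurableSpace γ] [StandardBorelSpace γ] [Nonempty γ]
    (π : Measure Ω) [IsFiniteMeasure π] {U : Ω → α} {V : Ω → β} {W : Ω → γ}
    (hU : Measurable U) (hV : Measurable V) (hW : Measurable W)
    (k : Kernel α γ) [IsMarkovKernel k]
    (h : π.map (fun ω => ((U ω, V ω), W ω)) = π.map (fun ω => (U ω, V ω)) ⊗ₘ k.prodMkRight β) :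
    V ⟂ᵢ[U, hU; π] W := by
  have hUV : Measurable fun ω => (U ω, V ω) := hU.prodMk hV
  rw [condIndepFun_iff_condDistrib_prod_ae_eq_prodMkRight hW hV hU]
  have h1 := condDistrib_ae_eq_of_measure_eq_compProd_of_measurable (μ := π) hUV hW h
  have h2 : condDistrib W U π =ᵐ[π.map U] k := by
    refine condDistrib_ae_eq_of_measure_eq_compProd_of_measurable hU hW ?_
    ext s hs
    have hs' : MeasurableSet ((fun q : (α × β) × γ => (q.1.1, q.2)) ⁻¹' s) := by
      exact (by fun_prop : Measurable fun q : (α × β) × γ => (q.1.1, q.2)) hs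
    have := congrArg (fun m => m ((fun q : (α × β) × γ => (q.1.1, q.2)) ⁻¹' s)) h
    rw [Measure.map_apply (hUV.prodMk hW) hs', Measure.compProd_apply hs',
      lintegral_map (Kernel.measurable_kernel_prodMk_left hs') hUV] at this
    rw [Measure.map_apply (hU.prodMk hW) hs, Measure.compProd_apply hs,
      lintegral_map (Kernel.measurable_kernel_prodMk_left hs) hU]
    exact this
  have h3 : ∀ᵐ p ∂π.map (fun ω => (U ω, V ω)), condDistrib W U π p.1 = k p.1 := by
    have hm : π.map U = (π.map (fun ω => (U ω, V ω))).map Prod.fst := by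
      rw [Measure.map_map measurable_fst hUV]; rfl
    rw [hm] at h2
    exact ae_of_ae_map measurable_fst.aemeasurable h2
  filter_upwards [h1, h3] with p hp1 hp3
  rw [hp1, Kernel.prodMkRight_apply, Kernel.prodMkRight_apply, hp3]

/-- One-step extension: a coupling `π` of the first marginals of two laws `γ.fst`, `γ.snd` on
`E × F` is extended by a kernel that couples conditional laws of the new coordinate, at the price
of twice the off-diagonal mass of `γ`. -/
lemma exists_coupling_kernel {E F : Type*} [MeasurableSpace E] [StandardBorelSpace E]
    [MeasurableSpace F] [StandardBorelSpace F] [Nonempty F]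
    (γ : Measure ((E × F) × (E × F))) [IsProbabilityMeasure γ]
    (π : Measure (E × E)) [IsProbabilityMeasure π]
    (h1 : π.fst = γ.fst.fst) (h2 : π.snd = γ.snd.fst) :
    ∃ (α β : Kernel E F) (K : Kernel (E × E) (F × F)), IsMarkovKernel α ∧ IsMarkovKernel β ∧
      IsMarkovKernel K ∧ K.fst = α.prodMkRight E ∧ K.snd = β.prodMkLeft E ∧
      γ.fst.fst ⊗ₘ α = γ.fst ∧ γ.snd.fst ⊗ₘ β = γ.snd ∧
      (π ⊗ₘ K) {q | q.1.1 ≠ q.1.2 ∨ q.2.1 ≠ q.2.2} ≤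
        π {z | z.1 ≠ z.2} + 2 * γ {q | q.1 ≠ q.2} := by
  classical
  have hD : MeasurableSet {q : (E × F) × (E × F) | q.1 = q.2} :=
    measurableSet_eq_fun measurable_fst measurable_snd
  have hDE : MeasurableSet {z : E × E | z.1 = z.2} :=
    measurableSet_eq_fun measurable_fst measurable_snd
  set D := {q : (E × F) × (E × F) | q.1 = q.2}
  set ρ : Measure (E × F) := (γ.restrict D).fst
  set σ : Measure (E × F) := (γ.restrict Dᶜ).fst
  set τ : Measure (E × F) := (γ.restrict Dᶜ).snd
  have hρ : (γ.restrict D).snd = ρ := by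
    refine Measure.map_congr ?_
    filter_upwards [ae_restrict_mem hD] with q hq using Eq.symm hq
  have hσ : ρ + σ = γ.fst := by
    rw [← Measure.fst_add, Measure.restrict_add_restrict_compl hD]
  have hτ : ρ + τ = γ.snd := by
    rw [← hρ, ← Measure.snd_add, Measure.restrict_add_restrict_compl hD]
  have hσu : σ Set.univ = γ Dᶜ := by
    rw [Measure.fst_univ, Measure.restrict_apply_univ]
  have hτu : τ Set.univ = γ Dᶜ := by
    rw [Measure.snd_univ, Measure.restrict_apply_univ]
  obtain ⟨f, hf, hf1, hfα, hfI⟩ := exists_kernel_mixture ρ σ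
  obtain ⟨g, hg, hg1, hgβ, hgI⟩ := exists_kernel_mixture ρ τ
  rw [hσ] at hfα hfI
  rw [hτ] at hgβ hgI
  have markov : ∀ (f : E → ℝ≥0∞), Measurable f → (∀ x, f x ≤ 1) →
      ∀ (κ η : Kernel E F) [IsMarkovKernel κ] [IsMarkovKernel η],
      IsMarkovKernel (scaleKernel f κ + scaleKernel (fun x => 1 - f x) η) := by
    intro f hf hf1 κ η _ _
    refine ⟨fun x => ⟨?_⟩⟩
    rw [add_apply, scaleKernel_apply hf, scaleKernel_apply (by fun_prop)]
    simp [hf1 x]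
  have hα := markov f hf hf1 ρ.condKernel σ.condKernel
  have hβ := markov g hg hg1 ρ.condKernel τ.condKernel
  set α := scaleKernel f ρ.condKernel + scaleKernel (fun x => 1 - f x) σ.condKernel
  set β := scaleKernel g ρ.condKernel + scaleKernel (fun x => 1 - g x) τ.condKernel
  set m : E × E → ℝ≥0∞ := fun z => if z.1 = z.2 then min (f z.1) (g z.2) else 0
  have hm : Measurable m := Measurable.ite hDE (by fun_prop) measurable_const
  have hmf : ∀ z, m z ≤ f z.1 := by
    intro z; simp only [m]; split_ifs <;> simp
  have hmg : ∀ z, m z ≤ g z.2 := by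
    intro z; simp only [m]; split_ifs <;> simp
  have ht : ∀ c : E × E → ℝ≥0∞, (∀ z, c z ≤ 1) → ∀ z, c z ≠ ∞ := fun c h z =>
    ne_top_of_le_ne_top ENNReal.one_ne_top (h z)
  have i1 := isSFiniteKernel_scaleKernel (ht m fun z => (hmf z).trans (hf1 _))
    (ρ.condKernel.comap Prod.fst (measurable_fst (β := E)))
  have i2 := isSFiniteKernel_scaleKernel (ht (fun z => f z.1 - m z)
    fun z => tsub_le_self.trans (hf1 _)) (ρ.condKernel.comap Prod.fst (measurable_fst (β := E)))
  have i3 := isSFiniteKernel_scaleKernel (ht (fun z => 1 - f z.1)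
    fun z => tsub_le_self) (σ.condKernel.comap Prod.fst (measurable_fst (β := E)))
  have i4 := isSFiniteKernel_scaleKernel (ht (fun z => g z.2 - m z)
    fun z => tsub_le_self.trans (hg1 _)) (ρ.condKernel.comap Prod.snd (measurable_snd (α := E)))
  have i5 := isSFiniteKernel_scaleKernel (ht (fun z => 1 - g z.2)
    fun z => tsub_le_self) (τ.condKernel.comap Prod.snd (measurable_snd (α := E)))
  obtain ⟨K, hK, hKfst, hKsnd, hKle⟩ := exists_coupling_of_common_part
    (scaleKernel m (ρ.condKernel.comap Prod.fst measurable_fst))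
    (scaleKernel (fun z => f z.1 - m z) (ρ.condKernel.comap Prod.fst measurable_fst) +
      scaleKernel (fun z => 1 - f z.1) (σ.condKernel.comap Prod.fst measurable_fst))
    (scaleKernel (fun z => g z.2 - m z) (ρ.condKernel.comap Prod.snd measurable_snd) +
      scaleKernel (fun z => 1 - g z.2) (τ.condKernel.comap Prod.snd measurable_snd))
    (α.prodMkRight E) (β.prodMkLeft E)
    (by
      ext1 z
      simp only [add_apply, Kernel.prodMkRight_apply, α]
      rw [scaleKernel_apply hm, scaleKernel_apply (by fun_prop), scaleKernel_apply (by fun_prop),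
        scaleKernel_apply hf, scaleKernel_apply (by fun_prop), ← add_assoc, Kernel.comap_apply,
        Kernel.comap_apply, ← add_smul, add_tsub_cancel_of_le (hmf z)])
    (by
      ext1 z
      simp only [add_apply, Kernel.prodMkLeft_apply, β]
      rw [scaleKernel_apply hm, scaleKernel_apply (by fun_prop), scaleKernel_apply (by fun_prop),
        scaleKernel_apply hg, scaleKernel_apply (by fun_prop), ← add_assoc, Kernel.comap_apply,
        Kernel.comap_apply, Kernel.comap_apply]
      have : m z • ρ.condKernel z.1 = m z • ρ.condKernel z.2 := by
        by_cases hz : z.1 = z.2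
        · rw [hz]
        · simp [m, hz]
      rw [this, ← add_smul, add_tsub_cancel_of_le (hmg z)])
  refine ⟨α, β, K, hα, hβ, hK, hKfst, hKsnd, hfα, hgβ, ?_⟩
  have hneE : MeasurableSet {z : E × E | z.1 ≠ z.2} := hDE.compl
  have hneF : MeasurableSet {p : F × F | p.1 ≠ p.2} :=
    (measurableSet_eq_fun measurable_fst measurable_snd).compl
  have hS : MeasurableSet {q : (E × E) × (F × F) | q.1.1 ≠ q.1.2 ∨ q.2.1 ≠ q.2.2} :=
    (measurable_fst hneE).union (measurable_snd hneF)
  have hbound : ∀ z, K z (Prod.mk z ⁻¹' {q : (E × E) × (F × F) | q.1.1 ≠ q.1.2 ∨ q.2.1 ≠ q.2.2}) ≤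
      {z : E × E | z.1 ≠ z.2}.indicator 1 z + ((1 - f z.1) + (1 - g z.2)) := by
    intro z
    by_cases hz : z.1 = z.2
    · have hset : Prod.mk z ⁻¹' {q : (E × E) × (F × F) | q.1.1 ≠ q.1.2 ∨ q.2.1 ≠ q.2.2} =
          {p : F × F | p.1 ≠ p.2} := by
        ext p; simp [hz]
      rw [hset]
      refine (hKle z).trans ?_
      rw [scaleKernel_apply hm]
      have hmz : m z = min (f z.1) (g z.2) := by simp [m, hz]
      simp only [Measure.smul_apply, measure_univ, smul_eq_mul, mul_one, hmz]
      refine le_trans ?_ le_add_self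
      rcases le_total (f z.1) (g z.2) with h | h
      · rw [min_eq_left h]; exact le_self_add
      · rw [min_eq_right h]; exact le_add_self
    · refine prob_le_one.trans (le_trans ?_ le_self_add)
      simp [hz]
  rw [Measure.compProd_apply hS]
  refine (lintegral_mono hbound).trans ?_
  rw [lintegral_add_left (measurable_one.indicator hneE), lintegral_indicator_one hneE,
    lintegral_add_left (by fun_prop)]
  have e1 : ∫⁻ z, (1 - f z.1) ∂π = γ Dᶜ := by
    rw [← hσu, ← hfI, ← h1, Measure.fst, lintegral_map (by fun_prop) measurable_fst]
  have e2 : ∫⁻ z, (1 - g z.2) ∂π = γ Dᶜ := by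
    rw [← hτu, ← hgI, ← h2, Measure.snd, lintegral_map (by fun_prop) measurable_snd]
  rw [e1, e2, ← two_mul]
  exact le_rfl

/-- If `W` depends on `(U, V)` only through `U`, then so does `W` together with a new coordinate
drawn from a kernel depending on `W` only. -/
lemma map_compProd_eq_compProd_prodMkRight {Z α β E A F : Type*} [MeasurableSpace Z]
    [MeasurableSpace α] [MeasurableSpace β] [MeasurableSpace E] [MeasurableSpace A]
    [MeasurableSpace F] (π : Measure Z) [IsFiniteMeasure π] (K : Kernel Z A) [IsMarkovKernel K]
    (η : Kernel E F) [IsMarkovKernel η] (k : Kernel α E) [IsMarkovKernel k]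
    {U : Z → α} {V : Z → β} {W : Z → E} {p : A → F}
    (hU : Measurable U) (hV : Measurable V) (hW : Measurable W) (hp : Measurable p)
    (hK : ∀ z, (K z).map p = η (W z))
    (h : π.map (fun z => ((U z, V z), W z)) = π.map (fun z => (U z, V z)) ⊗ₘ k.prodMkRight β) :
    (π ⊗ₘ K).map (fun q => ((U q.1, V q.1), (W q.1, p q.2))) =
      (π ⊗ₘ K).map (fun q => (U q.1, V q.1)) ⊗ₘ (k ⊗ₖ η.prodMkLeft α).prodMkRight β := by
  have hUV : Measurable fun z => (U z, V z) := hU.prodMk hV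
  have hfst : (π ⊗ₘ K).map (fun q => (U q.1, V q.1)) = π.map (fun z => (U z, V z)) := by
    conv_rhs => rw [← Measure.fst_compProd π K, Measure.fst, Measure.map_map hUV measurable_fst]
    rfl
  rw [hfst]
  ext s hs
  have hmeas : Measurable fun q : Z × A => ((U q.1, V q.1), (W q.1, p q.2)) := by fun_prop
  have hG : Measurable fun y : (α × β) × E => η y.2 ((fun a => (y.1, (y.2, a))) ⁻¹' s) := by
    have hs' : MeasurableSet ((fun q : ((α × β) × E) × F => (q.1.1, (q.1.2, q.2))) ⁻¹' s) :=
      (by fun_prop : Measurable fun q : ((α × β) × E) × F => (q.1.1, (q.1.2, q.2))) hs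
    exact Kernel.measurable_kernel_prodMk_left (κ := η.prodMkLeft (α × β)) hs'
  rw [Measure.map_apply hmeas hs, Measure.compProd_apply (hmeas hs), Measure.compProd_apply hs]
  have hl : ∀ z, K z (Prod.mk z ⁻¹' ((fun q : Z × A => ((U q.1, V q.1), (W q.1, p q.2))) ⁻¹' s)) =
      η (W z) ((fun a => ((U z, V z), (W z, a))) ⁻¹' s) := by
    intro z
    have hms : Measurable fun a : F => ((U z, V z), (W z, a)) := by fun_prop
    rw [← hK z, Measure.map_apply hp (hms hs)]
    rfl
  have hr : ∀ y : α × β, ((k ⊗ₖ η.prodMkLeft α).prodMkRight β) y (Prod.mk y ⁻¹' s) =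
      ∫⁻ x, η x ((fun a => (y, (x, a))) ⁻¹' s) ∂(k.prodMkRight β) y := by
    intro y
    rw [Kernel.prodMkRight_apply, Kernel.compProd_apply (measurable_prodMk_left hs)]
    rfl
  simp_rw [hl, hr]
  rw [← Measure.lintegral_compProd hG, ← h, lintegral_map hG (hUV.prodMk hW)]

lemma map_eq_compProd_deterministic {Z α β γ : Type*} [MeasurableSpace Z]
    [MeasurableSpace α] [MeasurableSpace β] [MeasurableSpace γ] (π : Measure Z) [IsFiniteMeasure π]
    {U : Z → α} {V : Z → β} {φ : α → γ}
    (hU : Measurable U) (hV : Measurable V) (hφ : Measurable φ) :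
    π.map (fun z => ((U z, V z), φ (U z))) =
      π.map (fun z => (U z, V z)) ⊗ₘ (Kernel.deterministic φ hφ).prodMkRight β := by
  have : (Kernel.deterministic φ hφ).prodMkRight β =
      Kernel.deterministic (fun p : α × β => φ p.1) (by fun_prop) := by
    ext1 p; simp [Kernel.prodMkRight_apply, Kernel.deterministic_apply]
  rw [this, Measure.compProd_deterministic, Measure.map_map (by fun_prop) (hU.prodMk hV)]
  rfl

lemma map_compProd_eq_compProd {Z E A F : Type*} [MeasurableSpace Z] [MeasurableSpace E]
    [MeasurableSpace A] [MeasurableSpace F] (π : Measure Z) [IsFiniteMeasure π]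
    (K : Kernel Z A) [IsMarkovKernel K] (η : Kernel E F) [IsMarkovKernel η]
    {W : Z → E} {p : A → F} (hW : Measurable W) (hp : Measurable p)
    (hK : ∀ z, (K z).map p = η (W z)) :
    (π ⊗ₘ K).map (fun q => (W q.1, p q.2)) = π.map W ⊗ₘ η := by
  have hmeas : Measurable fun q : Z × A => (W q.1, p q.2) := by fun_prop
  ext s hs
  rw [Measure.map_apply hmeas hs, Measure.compProd_apply (hmeas hs), Measure.compProd_apply hs,
    lintegral_map (Kernel.measurable_kernel_prodMk_left hs) hW]
  refine lintegral_congr fun z => ?_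
  rw [← hK z, Measure.map_apply hp (measurable_prodMk_left hs)]
  rfl

/-- Under `P`, for every `t` the conditional law of `X` given the first `t` coordinates of `X` and
`Y` depends on the first `t` coordinates of `X` only. -/
def HasCausalKernels {Ω : Type*} [MeasurableSpace Ω] {d T : ℕ} (P : Measure Ω)
    (X Y : Ω → Traj d T) : Prop :=
  ∀ t, 1 ≤ t → ∀ h : t ≤ T, ∃ k : Kernel (Traj d t) (Traj d T), IsMarkovKernel k ∧
    P.map (fun ω => ((restr d h (X ω), restr d h (Y ω)), X ω)) =
      P.map (fun ω => (restr d h (X ω), restr d h (Y ω))) ⊗ₘ k.prodMkRight (Traj d t)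

/-- Appending a last value to a path. -/
def snocTraj {d T : ℕ} (p : Traj d T × (Fin d → ℝ)) : Traj d (T + 1) :=
  Fin.snoc (α := fun _ => Fin d → ℝ) p.1 p.2

/-- Separating the last value of a path. -/
def splitTraj {d T : ℕ} (x : Traj d (T + 1)) : Traj d T × (Fin d → ℝ) :=
  (restr d (Nat.le_succ T) x, x (Fin.last T))

section Snoc

variable {d T : ℕ}

lemma snocTraj_splitTraj (x : Traj d (T + 1)) : snocTraj (splitTraj x) = x := by
  ext i : 1
  refine Fin.lastCases ?_ (fun j => ?_) i
  · simp [snocTraj, splitTraj]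
  · simp only [snocTraj, splitTraj, Fin.snoc_castSucc]
    rfl

lemma restr_snocTraj {t : ℕ} (h : t ≤ T) (h' : t ≤ T + 1) (p : Traj d T × (Fin d → ℝ)) :
    restr d h' (snocTraj p) = restr d h p.1 := by
  ext i : 1
  exact Fin.snoc_castSucc (α := fun _ => Fin d → ℝ) p.2 p.1 (Fin.castLE h i)

lemma measurable_snocTraj : Measurable (snocTraj (d := d) (T := T)) := by
  refine measurable_pi_lambda _ fun i => ?_
  refine Fin.lastCases ?_ (fun j => ?_) i
  · simpa [snocTraj] using measurable_snd
  · simp only [snocTraj, Fin.snoc_castSucc]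
    fun_prop

lemma measurable_splitTraj : Measurable (splitTraj (d := d) (T := T)) :=
  (measurable_restr d _).prodMk (measurable_pi_apply _)

end Snoc

section Causal

variable {Ω : Type*} [MeasurableSpace Ω] {d T : ℕ}

lemma HasCausalKernels.map {Ω' : Type*} [MeasurableSpace Ω'] {P : Measure Ω} {g : Ω → Ω'}
    (hg : Measurable g) {X Y : Ω' → Traj d T} (hX : Measurable X) (hY : Measurable Y)
    (h : HasCausalKernels P (X ∘ g) (Y ∘ g)) : HasCausalKernels (P.map g) X Y := by
  intro t ht htT
  obtain ⟨k, hk, hkeq⟩ := h t ht htT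
  have hr := measurable_restr d htT
  refine ⟨k, hk, ?_⟩
  rw [Measure.map_map (by fun_prop) hg, Measure.map_map (by fun_prop) hg]
  exact hkeq

lemma exists_kernel_restr_self (P : Measure Ω) [IsFiniteMeasure P] {X Y : Ω → Traj d T}
    (hX : Measurable X) (hY : Measurable Y) :
    ∃ k : Kernel (Traj d T) (Traj d T), IsMarkovKernel k ∧
      P.map (fun ω => ((restr d le_rfl (X ω), restr d le_rfl (Y ω)), X ω)) =
        P.map (fun ω => (restr d le_rfl (X ω), restr d le_rfl (Y ω))) ⊗ₘ
          k.prodMkRight (Traj d T) :=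
  ⟨Kernel.deterministic id measurable_id, inferInstance,
    map_eq_compProd_deterministic P hX hY measurable_id⟩

lemma HasCausalKernels.snoc {A : Type*} [MeasurableSpace A] (P : Measure Ω) [IsFiniteMeasure P]
    (K : Kernel Ω A) [IsMarkovKernel K] (η : Kernel (Traj d T) (Fin d → ℝ)) [IsMarkovKernel η]
    {X Y : Ω → Traj d T} {p p' : A → Fin d → ℝ} (hX : Measurable X) (hY : Measurable Y)
    (hp : Measurable p) (hp' : Measurable p') (hK : ∀ z, (K z).map p = η (X z))
    (h : HasCausalKernels P X Y) :
    HasCausalKernels (P ⊗ₘ K) (fun q => snocTraj (X q.1, p q.2))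
      (fun q => snocTraj (Y q.1, p' q.2)) := by
  intro t ht htT
  have hs := measurable_snocTraj (d := d) (T := T)
  rcases Nat.lt_or_ge T t with hlt | hle
  · obtain rfl : t = T + 1 := le_antisymm htT hlt
    exact exists_kernel_restr_self _ (by fun_prop) (by fun_prop)
  · obtain ⟨k, hk, hkeq⟩ := h t ht hle
    have hr := measurable_restr d hle
    have hU : Measurable fun ω => restr d hle (X ω) := hr.comp hX
    have hV : Measurable fun ω => restr d hle (Y ω) := hr.comp hY
    have hmain := map_compProd_eq_compProd_prodMkRight P K η k hU hV hX hp hK hkeq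
    refine ⟨(k ⊗ₖ η.prodMkLeft (Traj d t)).map snocTraj, Kernel.IsMarkovKernel.map _ hs, ?_⟩
    simp only [restr_snocTraj hle]
    rw [← Kernel.map_prodMkRight, Measure.compProd_map hs, ← hmain,
      Measure.map_map (by fun_prop) (by fun_prop)]
    rfl

lemma isBicausal_of_hasCausalKernels (π : Measure (Traj d T × Traj d T)) [IsFiniteMeasure π]
    (hXY : HasCausalKernels π Prod.fst Prod.snd) (hYX : HasCausalKernels π Prod.snd Prod.fst) :
    IsBicausal d T π := by
  intro t ht h
  have hr := measurable_restr d (Nat.le_of_succ_le h)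
  obtain ⟨k, hk, hkeq⟩ := hXY t ht (Nat.le_of_succ_le h)
  obtain ⟨k', hk', hkeq'⟩ := hYX t ht (Nat.le_of_succ_le h)
  exact ⟨(condIndepFun_iff_condIndep _ _ _ _ _).1
      (condIndepFun_of_map_eq_compProd π (hr.comp measurable_fst) (hr.comp measurable_snd)
        measurable_fst k hkeq),
    (condIndepFun_iff_condIndep _ _ _ _ _).1
      (condIndepFun_of_map_eq_compProd π (hr.comp measurable_snd) (hr.comp measurable_fst)
        measurable_snd k' hkeq')⟩

end Causal

lemma exists_causal_coupling (d T : ℕ) (γ : Measure (Traj d (T + 1) × Traj d (T + 1)))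
    [IsProbabilityMeasure γ] :
    ∃ π : Measure (Traj d (T + 1) × Traj d (T + 1)), IsProbabilityMeasure π ∧
      π.fst = γ.fst ∧ π.snd = γ.snd ∧ HasCausalKernels π Prod.fst Prod.snd ∧
      HasCausalKernels π Prod.snd Prod.fst ∧
      π {q | q.1 ≠ q.2} ≤ ((2 * T + 1 : ℕ) : ℝ≥0∞) * γ {q | q.1 ≠ q.2} := by
  induction T with
  | zero =>
    refine ⟨γ, inferInstance, rfl, rfl, ?_, ?_, by simp⟩
    · intro t ht h
      obtain rfl : t = 0 + 1 := le_antisymm h ht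
      exact exists_kernel_restr_self γ measurable_fst measurable_snd
    · intro t ht h
      obtain rfl : t = 0 + 1 := le_antisymm h ht
      exact exists_kernel_restr_self γ measurable_snd measurable_fst
  | succ T ih =>
    have hsplit := measurable_splitTraj (d := d) (T := T + 1)
    have hsnoc := measurable_snocTraj (d := d) (T := T + 1)
    have hr := measurable_restr d (Nat.le_succ (T + 1))
    have hrm := hr.prodMap hr
    have hsm := hsplit.prodMap hsplit
    have hne : ∀ {α : Type} [MeasurableSpace α] [StandardBorelSpace α],
        MeasurableSet {q : α × α | q.1 ≠ q.2} := fun {α} _ _ =>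
      (measurableSet_eq_fun measurable_fst measurable_snd).compl
    have : IsProbabilityMeasure (γ.map (Prod.map (restr d (Nat.le_succ (T + 1)))
      (restr d (Nat.le_succ (T + 1))))) := Measure.isProbabilityMeasure_map hrm.aemeasurable
    have : IsProbabilityMeasure (γ.map (Prod.map (splitTraj (d := d) (T := T + 1)) splitTraj)) :=
      Measure.isProbabilityMeasure_map hsm.aemeasurable
    obtain ⟨π', hπ', h1, h2, hc1, hc2, hle⟩ := ih (γ.map (Prod.map
      (restr d (Nat.le_succ (T + 1))) (restr d (Nat.le_succ (T + 1)))))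
    have hsfst : (γ.map (Prod.map splitTraj splitTraj)).fst = γ.fst.map splitTraj := by
      rw [Measure.fst, Measure.fst, Measure.map_map measurable_fst hsm,
        Measure.map_map hsplit measurable_fst]
      rfl
    have hssnd : (γ.map (Prod.map splitTraj splitTraj)).snd = γ.snd.map splitTraj := by
      rw [Measure.snd, Measure.snd, Measure.map_map measurable_snd hsm,
        Measure.map_map hsplit measurable_snd]
      rfl
    have e1 : π'.fst = (γ.map (Prod.map splitTraj splitTraj)).fst.fst := by
      rw [h1, hsfst, Measure.fst, Measure.fst, Measure.fst, Measure.map_map measurable_fst hrm,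
        Measure.map_map hsplit measurable_fst,
        Measure.map_map measurable_fst (hsplit.comp measurable_fst)]
      rfl
    have e2 : π'.snd = (γ.map (Prod.map splitTraj splitTraj)).snd.fst := by
      rw [h2, hssnd, Measure.snd, Measure.snd, Measure.fst, Measure.map_map measurable_snd hrm,
        Measure.map_map hsplit measurable_snd,
        Measure.map_map measurable_fst (hsplit.comp measurable_snd)]
      rfl
    obtain ⟨α, β, K, hα, hβ, hK, hKα, hKβ, hγα, hγβ, hcost⟩ :=
      exists_coupling_kernel (γ.map (Prod.map splitTraj splitTraj)) π' e1 e2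
    have hKα' : ∀ z, (K z).map Prod.fst = α z.1 := fun z => by
      rw [← Kernel.fst_apply, hKα, Kernel.prodMkRight_apply]
    have hKβ' : ∀ z, (K z).map Prod.snd = β z.2 := fun z => by
      rw [← Kernel.snd_apply, hKβ, Kernel.prodMkLeft_apply]
    set G : (Traj d (T + 1) × Traj d (T + 1)) × ((Fin d → ℝ) × (Fin d → ℝ)) →
      Traj d (T + 1 + 1) × Traj d (T + 1 + 1) :=
      fun q => (snocTraj (q.1.1, q.2.1), snocTraj (q.1.2, q.2.2)) with hGdef
    have hG : Measurable G := by fun_prop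
    have hid : (snocTraj ∘ splitTraj : Traj d (T + 1 + 1) → Traj d (T + 1 + 1)) = id :=
      funext snocTraj_splitTraj
    refine ⟨(π' ⊗ₘ K).map G, Measure.isProbabilityMeasure_map hG.aemeasurable, ?_, ?_, ?_, ?_, ?_⟩
    · have hm := map_compProd_eq_compProd π' K α measurable_fst measurable_fst hKα'
      rw [← Measure.fst, e1, hγα, hsfst] at hm
      have := congrArg (Measure.map snocTraj) hm
      rw [Measure.map_map hsnoc hsplit, hid, Measure.map_id,
        Measure.map_map hsnoc (by fun_prop)] at this
      rw [← this, Measure.fst, Measure.map_map measurable_fst hG]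
      rfl
    · have hm := map_compProd_eq_compProd π' K β measurable_snd measurable_snd hKβ'
      rw [← Measure.snd, e2, hγβ, hssnd] at hm
      have := congrArg (Measure.map snocTraj) hm
      rw [Measure.map_map hsnoc hsplit, hid, Measure.map_id,
        Measure.map_map hsnoc (by fun_prop)] at this
      rw [← this, Measure.snd, Measure.map_map measurable_snd hG]
      rfl
    · exact HasCausalKernels.map hG measurable_fst measurable_snd
        (HasCausalKernels.snoc π' K α measurable_fst measurable_snd measurable_fst measurable_snd
          hKα' hc1)
    · exact HasCausalKernels.map hG measurable_snd measurable_fst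
        (HasCausalKernels.snoc π' K β measurable_snd measurable_fst measurable_snd measurable_fst
          hKβ' hc2)
    · have hγr : (γ.map (Prod.map (restr d (Nat.le_succ (T + 1)))
          (restr d (Nat.le_succ (T + 1))))) {q | q.1 ≠ q.2} ≤ γ {q | q.1 ≠ q.2} := by
        rw [Measure.map_apply hrm hne]
        exact measure_mono fun q hq h => hq (congrArg (restr d (Nat.le_succ (T + 1))) h)
      have hγs : (γ.map (Prod.map (splitTraj (d := d) (T := T + 1)) splitTraj)) {q | q.1 ≠ q.2} ≤
          γ {q | q.1 ≠ q.2} := by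
        rw [Measure.map_apply hsm hne]
        exact measure_mono fun q hq h => hq (congrArg splitTraj h)
      rw [Measure.map_apply hG hne]
      calc (π' ⊗ₘ K) (G ⁻¹' {q | q.1 ≠ q.2})
          ≤ (π' ⊗ₘ K) {q | q.1.1 ≠ q.1.2 ∨ q.2.1 ≠ q.2.2} := by
            refine measure_mono fun q hq => ?_
            by_contra hcon
            simp only [Set.mem_ofPred_eq, not_or, not_not] at hcon
            exact hq (by simp only [hGdef, hcon.1, hcon.2])
        _ ≤ _ := hcost
        _ ≤ ((2 * T + 1 : ℕ) : ℝ≥0∞) * γ {q | q.1 ≠ q.2} + 2 * γ {q | q.1 ≠ q.2} := by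
            gcongr
            exact hle.trans (by gcongr)
        _ = ((2 * (T + 1) + 1 : ℕ) : ℝ≥0∞) * γ {q | q.1 ≠ q.2} := by
            push_cast
            ring

/-- For Borel probability measures `μ, ν` on the path space `ℝ^{dT}`,
the adapted total variation is at most `(2T - 1)` times the total variation. -/
theorem adapted_tv_le_tv (d T : ℕ) (hd : 1 ≤ d) (hT : 1 ≤ T)
    (μ ν : Measure (Traj d T)) [IsProbabilityMeasure μ] [IsProbabilityMeasure ν] :
    ATVw (fun _ => 1) μ ν ≤ ((2 * T - 1 : ℕ) : ℝ≥0∞) * TVw (fun _ => 1) μ ν := by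
  obtain ⟨S, rfl⟩ : ∃ S, T = S + 1 := ⟨T - 1, by omega⟩
  have hS : 2 * (S + 1) - 1 = 2 * S + 1 := by omega
  rw [hS, TVw, ENNReal.mul_iInf_of_ne (by simp) (ENNReal.natCast_ne_top _)]
  refine le_iInf fun γ => ?_
  rw [ENNReal.mul_iInf_of_ne (by simp) (ENNReal.natCast_ne_top _)]
  refine le_iInf fun hγ => ?_
  obtain ⟨hγp, hγ1, hγ2⟩ := hγ
  obtain ⟨π, hπ, h1, h2, hc1, hc2, hle⟩ := exists_causal_coupling d S γ
  refine (iInf₂_le π ⟨⟨hπ, h1.trans hγ1, h2.trans hγ2⟩, inferInstance,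
    isBicausal_of_hasCausalKernels π hc1 hc2⟩).trans ?_
  simp only [lintegral_const, Measure.restrict_apply_univ]
  rw [mul_left_comm]
  gcongr

end
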